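/- arXiv:2407.06364 — 2 statements merged into one kernel-verified Lean document; each statement's English description precedes it below -/
import Mathlib

section
/- If T is a Wakamatsu tilting (S,R)-bimodule such that the projective dimension of T as a right R-module and the projective dimension of T as a left S-module are both finite, then T is a tilting right R-module; that is, T is an n-tilting module for some n ∈ ℕ. -/
open Function MulOpposite

universe u

noncomputable section

/-! ## Chain conditions -/

/-- A ring is right coherent if every finitely generated right ideal is finitely presented. -/
def IsRightCoherentRing (R : Type u) [Ring R] : Prop :=
  ∀ I : Submodule Rᵐᵒᵖ R, I.FG → Module.FinitePresentation Rᵐᵒᵖ I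

/-- A ring is left coherent if every finitely generated left ideal is finitely presented. -/
def IsLeftCoherentRing (S : Type u) [Ring S] : Prop :=
  ∀ I : Submodule S S, I.FG → Module.FinitePresentation S I

/-- A ring is right Noetherian if every right ideal is finitely generated. -/
def IsRightNoetherianRing (R : Type u) [Ring R] : Prop :=
  ∀ I : Submodule Rᵐᵒᵖ R, I.FG

/-! ## The tensor product `N ⊗_S T` of a right `S`-module `N` with a left `S`-module `T` -/

section MTensor

variable (S : Type u) [Ring S]
variable (N : Type u) [AddCommGroup N] [Module Sᵐᵒᵖ N]
variable (T : Type u) [AddCommGroup T] [Module S T]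

/-- The subgroup of balancing relations defining `N ⊗_S T` as a quotient of `T ⊗_ℤ N`. -/
def mtRel : AddSubgroup (TensorProduct ℤ T N) :=
  AddSubgroup.closure
    {x | ∃ (s : S) (t : T) (n : N), x = (s • t) ⊗ₜ[ℤ] n - t ⊗ₜ[ℤ] (op s • n)}

/-- `MTensor S N T` is the tensor product `N ⊗_S T` of a right `S`-module `N` with a left
`S`-module `T`, realized as a quotient of `T ⊗_ℤ N`. -/
def MTensor : Type u := TensorProduct ℤ T N ⧸ mtRel S N T

instance : AddCommGroup (MTensor S N T) :=
  inferInstanceAs (AddCommGroup (TensorProduct ℤ T N ⧸ mtRel S N T))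

variable {S N T}

/-- `MTensor.mk n t` is the element `n ⊗ t` of `N ⊗_S T`. -/
def MTensor.mk (n : N) (t : T) : MTensor S N T := QuotientAddGroup.mk (t ⊗ₜ[ℤ] n)

section Map

variable {N' : Type u} [AddCommGroup N'] [Module Sᵐᵒᵖ N']

/-- Functoriality of `N ⊗_S T` in the right `S`-module variable `N`. -/
def MTensor.map (g : N →ₗ[Sᵐᵒᵖ] N') : MTensor S N T →+ MTensor S N' T :=
  QuotientAddGroup.map _ _
    (LinearMap.lTensor T g.toAddMonoidHom.toIntLinearMap).toAddMonoidHom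
    (by
      refine (AddSubgroup.closure_le _).2 ?_
      rintro x ⟨s, t, n, rfl⟩
      simp only [SetLike.mem_coe, AddSubgroup.mem_comap, LinearMap.toAddMonoidHom_coe,
        map_sub, LinearMap.lTensor_tmul, AddMonoidHom.coe_toIntLinearMap,
        LinearMap.toAddMonoidHom_coe, map_smul]
      exact AddSubgroup.subset_closure ⟨s, t, g n, rfl⟩)

end Map

section LMap

variable {T' : Type u} [AddCommGroup T'] [Module S T']

/-- Functoriality of `N ⊗_S T` in the left `S`-module variable `T`. -/
def MTensor.lmap (h : T →ₗ[S] T') : MTensor S N T →+ MTensor S N T' :=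
  QuotientAddGroup.map _ _
    (LinearMap.rTensor N h.toAddMonoidHom.toIntLinearMap).toAddMonoidHom
    (by
      refine (AddSubgroup.closure_le _).2 ?_
      rintro x ⟨s, t, n, rfl⟩
      simp only [SetLike.mem_coe, AddSubgroup.mem_comap, LinearMap.toAddMonoidHom_coe,
        map_sub, LinearMap.rTensor_tmul, AddMonoidHom.coe_toIntLinearMap, map_smul]
      exact AddSubgroup.subset_closure ⟨s, h t, n, rfl⟩)

end LMap

section Bimod

variable (R : Type u) [Ring R] [Module Rᵐᵒᵖ T] [SMulCommClass S Rᵐᵒᵖ T]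

instance MTensor.instSMul : SMul Rᵐᵒᵖ (MTensor S N T) :=
  ⟨fun ρ =>
    QuotientAddGroup.map _ _ (DistribMulAction.toAddMonoidHom (TensorProduct ℤ T N) ρ)
      (by
        refine (AddSubgroup.closure_le _).2 ?_
        rintro x ⟨s, t, n, rfl⟩
        simp only [SetLike.mem_coe, AddSubgroup.mem_comap,
          DistribMulAction.toAddMonoidHom_apply, smul_sub, TensorProduct.smul_tmul']
        exact AddSubgroup.subset_closure ⟨s, ρ • t, n, by rw [smul_comm s ρ t]⟩)⟩

instance MTensor.instModule : Module Rᵐᵒᵖ (MTensor S N T) :=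
  Function.Surjective.module Rᵐᵒᵖ (QuotientAddGroup.mk' (mtRel S N T))
    (QuotientAddGroup.mk'_surjective _) (fun _ _ => rfl)

theorem MTensor.smul_mk (ρ : Rᵐᵒᵖ) (n : N) (t : T) :
    ρ • (MTensor.mk n t : MTensor S N T) = MTensor.mk n (ρ • t) := by
  show QuotientAddGroup.mk (ρ • (t ⊗ₜ[ℤ] n)) = QuotientAddGroup.mk ((ρ • t) ⊗ₜ[ℤ] n)
  rw [TensorProduct.smul_tmul']

theorem MTensor.mk_add_right (n : N) (t t' : T) :
    (MTensor.mk n (t + t') : MTensor S N T) = MTensor.mk n t + MTensor.mk n t' := by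
  show QuotientAddGroup.mk _ = _
  rw [TensorProduct.add_tmul]
  rfl

/-- The natural map `θ_N : N → Hom_R(T, N ⊗_S T)`, `n ↦ (t ↦ n ⊗ t)`. -/
def MTensor.theta (n : N) : T →ₗ[Rᵐᵒᵖ] MTensor S N T where
  toFun t := MTensor.mk n t
  map_add' t t' := MTensor.mk_add_right n t t'
  map_smul' ρ t := (MTensor.smul_mk R ρ n t).symm

variable (S T N) in
/-- The natural map `θ_N : N → Hom_R(T, N ⊗_S T)` as a function. -/
def MTensor.thetaFun : N → (T →ₗ[Rᵐᵒᵖ] MTensor S N T) := fun n => MTensor.theta R n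

end Bimod

end MTensor

/-! ## The right `S`-module structure on `Hom_A(T, M)` induced by a left `S`-action on `T` -/

section HomModule

variable {B A : Type u} [Ring B] [Ring A]
variable {T : Type u} [AddCommGroup T] [Module A T] [Module B T] [SMulCommClass B A T]
variable {M : Type u} [AddCommGroup M] [Module A M]

instance homDomSMul : SMul Bᵐᵒᵖ (T →ₗ[A] M) :=
  ⟨fun b f =>
    { toFun := fun t => f (b.unop • t)
      map_add' := fun t t' => by
        show f (b.unop • (t + t')) = f (b.unop • t) + f (b.unop • t')
        rw [smul_add, map_add]
      map_smul' := fun a t => by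
        show f (b.unop • a • t) = a • f (b.unop • t)
        rw [smul_comm b.unop a t, map_smul] }⟩

@[simp] theorem homDomSMul_apply (b : Bᵐᵒᵖ) (f : T →ₗ[A] M) (t : T) :
    (b • f) t = f (b.unop • t) := rfl

instance homDomModule : Module Bᵐᵒᵖ (T →ₗ[A] M) where
  one_smul f := LinearMap.ext fun t => by simp
  mul_smul b b' f := LinearMap.ext fun t => by simp [mul_smul]
  smul_zero b := LinearMap.ext fun t => rfl
  smul_add b f g := LinearMap.ext fun t => rfl
  add_smul b b' f := LinearMap.ext fun t => by simp [add_smul]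
  zero_smul f := LinearMap.ext fun t => by simp

end HomModule

/-! ## The evaluation map `ν_M : Hom_R(T, M) ⊗_S T → M` -/

section Nu

variable (S R : Type u) [Ring S] [Ring R]
variable (T : Type u) [AddCommGroup T] [Module S T] [Module Rᵐᵒᵖ T] [SMulCommClass S Rᵐᵒᵖ T]
variable (M : Type u) [AddCommGroup M] [Module Rᵐᵒᵖ M]

/-- The evaluation map `ν_M : Hom_R(T, M) ⊗_S T → M`, `f ⊗ t ↦ f t`. -/
def MTensor.nuFun : MTensor S (T →ₗ[Rᵐᵒᵖ] M) T →+ M :=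
  QuotientAddGroup.lift _
    (TensorProduct.liftAddHom
      { toFun := fun t =>
          { toFun := fun f : T →ₗ[Rᵐᵒᵖ] M => f t
            map_zero' := rfl
            map_add' := fun f g => rfl }
        map_zero' := AddMonoidHom.ext fun f => f.map_zero
        map_add' := fun t t' => AddMonoidHom.ext fun f => f.map_add t t' }
      (fun z t f => by
        show f (z • t) = (z • f) t
        rw [map_zsmul, LinearMap.smul_apply]))
    (by
      refine (AddSubgroup.closure_le _).2 ?_
      rintro x ⟨s, t, f, rfl⟩
      simp only [SetLike.mem_coe, AddMonoidHom.mem_ker, map_sub,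
        TensorProduct.liftAddHom_tmul, AddMonoidHom.coe_mk, ZeroHom.coe_mk]
      show f (s • t) - (op s • f) t = 0
      rw [homDomSMul_apply]
      simp)

end Nu


/-! ## Resolutions and derived-functor vanishing -/

/-- The data of a nonnegatively graded chain complex `⋯ → P 1 → P 0 → X` of `A`-modules. -/
structure ResolutionData (A : Type u) [Ring A] (X : Type u) [AddCommGroup X] [Module A X] :
    Type (u + 1) where
  P : ℕ → Type u
  [instAdd : ∀ n, AddCommGroup (P n)]
  [instMod : ∀ n, Module A (P n)]
  d : ∀ n, P (n + 1) →ₗ[A] P n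
  ε : P 0 →ₗ[A] X

attribute [instance] ResolutionData.instAdd ResolutionData.instMod

/-- The property of being a projective resolution. -/
structure ResolutionData.IsProjResolution {A : Type u} [Ring A] {X : Type u} [AddCommGroup X]
    [Module A X] (Q : ResolutionData A X) : Prop where
  proj : ∀ n, Module.Projective A (Q.P n)
  surj : Function.Surjective Q.ε
  exact0 : Function.Exact (Q.d 0) Q.ε
  exactSucc : ∀ n, Function.Exact (Q.d (n + 1)) (Q.d n)

/-- `X` has a resolution by finitely generated projective `A`-modules. -/
def HasFGProjResolution (A : Type u) [Ring A] (X : Type u) [AddCommGroup X] [Module A X] : Prop :=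
  ∃ Q : ResolutionData A X, Q.IsProjResolution ∧ ∀ n, Module.Finite A (Q.P n)

/-- `Ext^i_A(X, Y) = 0` for all `i ≥ 1`: some (equivalently, any) projective resolution of `X`
has `Hom_A(-, Y)`-complex exact at all positive degrees. -/
def ExtVanishAll (A : Type u) [Ring A] (X Y : Type u) [AddCommGroup X] [Module A X]
    [AddCommGroup Y] [Module A Y] : Prop :=
  ∃ Q : ResolutionData A X, Q.IsProjResolution ∧
    ∀ j : ℕ, Function.Exact
      (fun f : Q.P j →ₗ[A] Y => f.comp (Q.d j))
      (fun f : Q.P (j + 1) →ₗ[A] Y => f.comp (Q.d (j + 1)))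

/-- `Ext^1_A(X, Y) = 0`: every short exact sequence `0 → Y → E → X → 0` splits. -/
def Ext1Vanishes (A : Type u) [Ring A] (X Y : Type u) [AddCommGroup X] [Module A X]
    [AddCommGroup Y] [Module A Y] : Prop :=
  ∀ (E : Type u) [AddCommGroup E] [Module A E] (i : Y →ₗ[A] E) (p : E →ₗ[A] X),
    Function.Injective i → Function.Surjective p → Function.Exact i p →
      ∃ s : X →ₗ[A] E, p.comp s = LinearMap.id

/-- `Tor^S_i(N, T) = 0` for all `i ≥ 1`: some (equivalently, any) projective resolution of the
right `S`-module `N` stays exact in positive degrees after applying `- ⊗_S T`. -/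
def TorVanishAll (S : Type u) [Ring S] (N : Type u) [AddCommGroup N] [Module Sᵐᵒᵖ N]
    (T : Type u) [AddCommGroup T] [Module S T] : Prop :=
  ∃ Q : ResolutionData Sᵐᵒᵖ N, Q.IsProjResolution ∧
    ∀ j : ℕ, Function.Exact
      (⇑(MTensor.map (T := T) (Q.d (j + 1))))
      (⇑(MTensor.map (T := T) (Q.d j)))

/-! ## Homological dimensions -/

/-- A surjection onto `M` from some module. -/
structure EpiOnto (A : Type u) [Ring A] (M : ModuleCat.{u} A) : Type (u + 1) where
  P : ModuleCat.{u} A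
  f : P →ₗ[A] M
  surj : Function.Surjective f

/-- An injection of `M` into some module. -/
structure MonoInto (A : Type u) [Ring A] (M : ModuleCat.{u} A) : Type (u + 1) where
  E : ModuleCat.{u} A
  f : M →ₗ[A] E
  inj : Function.Injective f

/-- `HasClassResolution A 𝒞 n M` says that there is an exact sequence
`0 → C_n → ⋯ → C_0 → M → 0` with all `C_i` in the class `𝒞`. -/
def HasClassResolution (A : Type u) [Ring A] (C : ModuleCat.{u} A → Prop) :
    ℕ → ModuleCat.{u} A → Prop
  | 0, M => C M
  | n + 1, M => ∃ e : EpiOnto A M, C e.P ∧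
      HasClassResolution A C n (ModuleCat.of A (LinearMap.ker e.f))

/-- `HasClassCoresolution A 𝒞 n M` says that there is an exact sequence
`0 → M → C^0 → ⋯ → C^n → 0` with all `C^i` in the class `𝒞`. -/
def HasClassCoresolution (A : Type u) [Ring A] (C : ModuleCat.{u} A → Prop) :
    ℕ → ModuleCat.{u} A → Prop
  | 0, M => C M
  | n + 1, M => ∃ m : MonoInto A M, C m.E ∧
      HasClassCoresolution A C n (ModuleCat.of A ((↥m.E) ⧸ LinearMap.range m.f))

/-- The projective dimension of `M` is at most `n`. -/
def ProjDimLE (A : Type u) [Ring A] (M : Type u) [AddCommGroup M] [Module A M] (n : ℕ) : Prop :=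
  HasClassResolution A (fun P => Module.Projective A P) n (ModuleCat.of A M)

/-- The injective dimension of `M` is at most `n`. -/
def InjDimLE (A : Type u) [Ring A] (M : Type u) [AddCommGroup M] [Module A M] (n : ℕ) : Prop :=
  HasClassCoresolution A (fun E => Module.Injective A E) n (ModuleCat.of A M)

/-- A right `S`-module `N` is flat if `N ⊗_S -` preserves injections of left `S`-modules. -/
def IsFlatRightModule (S : Type u) [Ring S] (N : Type u) [AddCommGroup N] [Module Sᵐᵒᵖ N] :
    Prop :=
  ∀ (X Y : Type u) [AddCommGroup X] [Module S X] [AddCommGroup Y] [Module S Y]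
    (g : X →ₗ[S] Y), Function.Injective g →
      Function.Injective (MTensor.lmap (N := N) g)

/-- The flat dimension of the right `S`-module `N` is at most `n`. -/
def FlatDimLE (S : Type u) [Ring S] (N : Type u) [AddCommGroup N] [Module Sᵐᵒᵖ N] (n : ℕ) :
    Prop :=
  HasClassResolution Sᵐᵒᵖ (fun P => IsFlatRightModule S P) n (ModuleCat.of Sᵐᵒᵖ N)

/-! ## Gorenstein homological algebra -/

/-- The data of a `ℤ`-indexed complex of `A`-modules. -/
structure ZComplex (A : Type u) [Ring A] : Type (u + 1) where
  P : ℤ → Type u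
  [instAdd : ∀ i, AddCommGroup (P i)]
  [instMod : ∀ i, Module A (P i)]
  d : ∀ i, P i →ₗ[A] P (i + 1)

attribute [instance] ZComplex.instAdd ZComplex.instMod

/-- Exactness of a `ℤ`-indexed complex. -/
def ZComplex.IsExact {A : Type u} [Ring A] (C : ZComplex A) : Prop :=
  ∀ i, Function.Exact (C.d i) (C.d (i + 1))

/-- A module is Gorenstein projective if it is a kernel of a totally acyclic complex of
projective modules. -/
def IsGorensteinProjective (A : Type u) [Ring A] (N : Type u) [AddCommGroup N] [Module A N] :
    Prop :=
  ∃ C : ZComplex A, (∀ i, Module.Projective A (C.P i)) ∧ C.IsExact ∧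
    (∀ (Q : Type u) [AddCommGroup Q] [Module A Q], Module.Projective A Q →
      ∀ i, Function.Exact
        (fun f : C.P (i + 1 + 1) →ₗ[A] Q => f.comp (C.d (i + 1)))
        (fun f : C.P (i + 1) →ₗ[A] Q => f.comp (C.d i))) ∧
    Nonempty (N ≃ₗ[A] LinearMap.ker (C.d 0))

/-- A module is Gorenstein injective if it is a kernel of a totally acyclic complex of
injective modules. -/
def IsGorensteinInjective (A : Type u) [Ring A] (M : Type u) [AddCommGroup M] [Module A M] :
    Prop :=
  ∃ C : ZComplex A, (∀ i, Module.Injective A (C.P i)) ∧ C.IsExact ∧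
    (∀ (I : Type u) [AddCommGroup I] [Module A I], Module.Injective A I →
      ∀ i, Function.Exact
        (fun f : I →ₗ[A] C.P i => (C.d i).comp f)
        (fun f : I →ₗ[A] C.P (i + 1) => (C.d (i + 1)).comp f)) ∧
    Nonempty (M ≃ₗ[A] LinearMap.ker (C.d 0))

/-- A right `S`-module is Gorenstein flat if it is a kernel of a complex of flat right
`S`-modules which stays exact after tensoring with any injective left `S`-module. -/
def IsGorensteinFlat (S : Type u) [Ring S] (N : Type u) [AddCommGroup N] [Module Sᵐᵒᵖ N] :
    Prop :=
  ∃ C : ZComplex Sᵐᵒᵖ, (∀ i, IsFlatRightModule S (C.P i)) ∧ C.IsExact ∧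
    (∀ (I : Type u) [AddCommGroup I] [Module S I], Module.Injective S I →
      ∀ i, Function.Exact
        (⇑(MTensor.map (T := I) (C.d i)))
        (⇑(MTensor.map (T := I) (C.d (i + 1))))) ∧
    Nonempty (N ≃ₗ[Sᵐᵒᵖ] LinearMap.ker (C.d 0))

/-- The Gorenstein projective dimension of `N` is at most `n`. -/
def GpdLE (A : Type u) [Ring A] (N : Type u) [AddCommGroup N] [Module A N] (n : ℕ) : Prop :=
  HasClassResolution A (fun P => IsGorensteinProjective A P) n (ModuleCat.of A N)

/-- The Gorenstein flat dimension of the right `S`-module `N` is at most `n`. -/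
def GfdLE (S : Type u) [Ring S] (N : Type u) [AddCommGroup N] [Module Sᵐᵒᵖ N] (n : ℕ) : Prop :=
  HasClassResolution Sᵐᵒᵖ (fun P => IsGorensteinFlat S P) n (ModuleCat.of Sᵐᵒᵖ N)

/-- The Gorenstein injective dimension of `M` is at most `n`. -/
def GidLE (A : Type u) [Ring A] (M : Type u) [AddCommGroup M] [Module A M] (n : ℕ) : Prop :=
  HasClassCoresolution A (fun E => IsGorensteinInjective A E) n (ModuleCat.of A M)

/-! ## Module classes `Prod(C)`, `Add(C)`, `add(C)` and (co)generators -/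

/-- `M` is a retract (equivalently, a direct summand up to isomorphism) of `P`. -/
def IsRetractOf (A : Type u) [Ring A] (M P : Type u) [AddCommGroup M] [Module A M]
    [AddCommGroup P] [Module A P] : Prop :=
  ∃ (f : M →ₗ[A] P) (g : P →ₗ[A] M), g.comp f = LinearMap.id

/-- `Prod(C)`: direct summands of direct products of copies of `C`. -/
def InProdClass (A : Type u) [Ring A] (C : Type u) [AddCommGroup C] [Module A C]
    (M : ModuleCat.{u} A) : Prop :=
  ∃ I : Type u, IsRetractOf A M (I → C)

/-- `Add(C)`: direct summands of direct sums of copies of `C`. -/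
def InAddClass (A : Type u) [Ring A] (C : Type u) [AddCommGroup C] [Module A C]
    (M : ModuleCat.{u} A) : Prop :=
  ∃ I : Type u, IsRetractOf A M (I →₀ C)

/-- `add(C)`: direct summands of finite direct sums of copies of `C`. -/
def InFinAddClass (A : Type u) [Ring A] (C : Type u) [AddCommGroup C] [Module A C]
    (M : ModuleCat.{u} A) : Prop :=
  ∃ k : ℕ, IsRetractOf A M (Fin k → C)

/-- `Q` is an injective cogenerator: `Q` is injective and every module embeds into a direct
product of copies of `Q`. -/
def IsInjectiveCogenerator (A : Type u) [Ring A] (Q : Type u) [AddCommGroup Q] [Module A Q] :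
    Prop :=
  Module.Injective A Q ∧
    ∀ (M : Type u) [AddCommGroup M] [Module A M],
      ∃ (I : Type u) (f : M →ₗ[A] (I → Q)), Function.Injective f

/-- `E` is the minimal injective cogenerator: it is an injective cogenerator which is a direct
summand of every injective cogenerator. -/
def IsMinimalInjectiveCogenerator (A : Type u) [Ring A] (E : Type u) [AddCommGroup E]
    [Module A E] : Prop :=
  IsInjectiveCogenerator A E ∧
    ∀ (Q : Type u) [AddCommGroup Q] [Module A Q],
      IsInjectiveCogenerator A Q → IsRetractOf A E Q

/-! ## Bimodules, homotheties, Wakamatsu tilting bimodules -/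

section Bimodules

variable (S R : Type u) [Ring S] [Ring R]
variable (T : Type u) [AddCommGroup T] [Module S T] [Module Rᵐᵒᵖ T] [SMulCommClass S Rᵐᵒᵖ T]

/-- The natural map `S → End(T_R)` given by the left `S`-action. -/
def leftHomothety : S → (T →ₗ[Rᵐᵒᵖ] T) := fun s =>
  { toFun := fun t => s • t
    map_add' := fun t t' => smul_add s t t'
    map_smul' := fun ρ t => smul_comm s ρ t }

/-- The natural map `R → End(_S T)` given by the right `R`-action. -/
def rightHomothety : R → (T →ₗ[S] T) := fun r =>
  { toFun := fun t => op r • t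
    map_add' := fun t t' => smul_add (op r) t t'
    map_smul' := fun s t => (smul_comm s (op r) t).symm }

/-- A Wakamatsu tilting `(S, R)`-bimodule: `T` admits resolutions by finitely generated
projectives on both sides, the natural maps `S → End(T_R)` and `R → End(_S T)` are
isomorphisms, and `Ext^i(T, T) = 0` on both sides for all `i ≥ 1`. -/
structure IsWakamatsuTilting : Prop where
  fgProjResR : HasFGProjResolution Rᵐᵒᵖ T
  fgProjResS : HasFGProjResolution S T
  bijS : Function.Bijective (leftHomothety S R T)
  bijR : Function.Bijective (rightHomothety S R T)
  extR : ExtVanishAll Rᵐᵒᵖ T T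
  extS : ExtVanishAll S T T

/-- An `(S, R)`-bimodule `T` is tensorly faithful if `T ⊗_R M = 0` implies `M = 0` and
`N ⊗_S T = 0` implies `N = 0`. -/
def IsTensorlyFaithful : Prop :=
  (∀ (M : Type u) [AddCommGroup M] [Module R M],
      Subsingleton (MTensor R T M) → Subsingleton M) ∧
  (∀ (N : Type u) [AddCommGroup N] [Module Sᵐᵒᵖ N],
      Subsingleton (MTensor S N T) → Subsingleton N)

/-- Membership in the Auslander class `𝒜_T(S)`. -/
structure InAuslanderClass (N : Type u) [AddCommGroup N] [Module Sᵐᵒᵖ N] : Prop where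
  torVanish : TorVanishAll S N T
  extVanish : ExtVanishAll Rᵐᵒᵖ T (MTensor S N T)
  thetaBij : Function.Bijective (MTensor.thetaFun S N T R)

/-- Membership in the Bass class `ℬ_T(R)`. -/
structure InBassClass (M : Type u) [AddCommGroup M] [Module Rᵐᵒᵖ M] : Prop where
  extVanish : ExtVanishAll Rᵐᵒᵖ T M
  torVanish : TorVanishAll S (T →ₗ[Rᵐᵒᵖ] M) T
  nuBij : Function.Bijective (MTensor.nuFun S R T M)

end Bimodules

/-! ## Cotilting and tilting modules -/

/-- A cotilting right `R`-module (Hügel–Coelho): finite injective dimension,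
`Ext^{i≥1}_R(Cᴵ, C) = 0` for every index set `I`, and there is a finite exact sequence
`0 → C_r → ⋯ → C_0 → Q → 0` with all `C_i ∈ Prod(C)` and `Q` an injective cogenerator. -/
structure IsCotilting (R : Type u) [Ring R] (C : Type u) [AddCommGroup C] [Module Rᵐᵒᵖ C] :
    Prop where
  finInjDim : ∃ n, InjDimLE Rᵐᵒᵖ C n
  extProdVanish : ∀ I : Type u, ExtVanishAll Rᵐᵒᵖ (I → C) C
  coresolution : ∃ (Q : ModuleCat.{u} Rᵐᵒᵖ) (r : ℕ),
    IsInjectiveCogenerator Rᵐᵒᵖ Q ∧ HasClassResolution Rᵐᵒᵖ (InProdClass Rᵐᵒᵖ C) r Q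

/-- An `n`-tilting right `R`-module (Miyashita). -/
structure IsNTilting (R : Type u) [Ring R] (T : Type u) [AddCommGroup T] [Module Rᵐᵒᵖ T]
    (n : ℕ) : Prop where
  fgProjRes : HasFGProjResolution Rᵐᵒᵖ T
  projDim : ProjDimLE Rᵐᵒᵖ T n
  extVanish : ExtVanishAll Rᵐᵒᵖ T T
  coresolution : HasClassCoresolution Rᵐᵒᵖ (InFinAddClass Rᵐᵒᵖ T) n (ModuleCat.of Rᵐᵒᵖ R)

/-- The data of a coresolution `0 → R → P 0 → P 1 → ⋯` of right `R`-modules. -/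
structure WakamatsuCoresolutionData (R : Type u) [Ring R] : Type (u + 1) where
  P : ℕ → Type u
  [instAdd : ∀ n, AddCommGroup (P n)]
  [instMod : ∀ n, Module Rᵐᵒᵖ (P n)]
  f0 : R →ₗ[Rᵐᵒᵖ] P 0
  d : ∀ n, P n →ₗ[Rᵐᵒᵖ] P (n + 1)

attribute [instance] WakamatsuCoresolutionData.instAdd WakamatsuCoresolutionData.instMod

/-- A Wakamatsu tilting right `R`-module: it admits a resolution by finitely generated
projective right `R`-modules, `Ext^{i≥1}_R(T, T) = 0`, and there is an exact sequence
`0 → R → T^0 → T^1 → ⋯` with each `T^i ∈ add(T)` and `Ext^1_R(Coker f, T) = 0` for every map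
`f` in this sequence. -/
def IsWakamatsuTiltingModule (R : Type u) [Ring R] (T : Type u) [AddCommGroup T]
    [Module Rᵐᵒᵖ T] : Prop :=
  HasFGProjResolution Rᵐᵒᵖ T ∧ ExtVanishAll Rᵐᵒᵖ T T ∧
    ∃ W : WakamatsuCoresolutionData R,
      Function.Injective W.f0 ∧ Function.Exact W.f0 (W.d 0) ∧
      (∀ n, Function.Exact (W.d n) (W.d (n + 1))) ∧
      (∀ n, InFinAddClass Rᵐᵒᵖ T (ModuleCat.of Rᵐᵒᵖ (W.P n))) ∧
      Ext1Vanishes Rᵐᵒᵖ ((W.P 0) ⧸ LinearMap.range W.f0) T ∧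
      (∀ n, Ext1Vanishes Rᵐᵒᵖ ((W.P (n + 1)) ⧸ LinearMap.range (W.d n)) T)

/-!
Since `T` has finite projective dimension and a resolution by finitely generated projectives over
`S`, some syzygy in that resolution is projective, which leaves a finite resolution
`0 → P_n → ⋯ → P_0 → T → 0` by finitely generated projective left `S`-modules. As
`Ext^i_S(T, T) = 0` for `i > 0`, it stays exact under `Hom_S(-, T)`, and since
`Hom_S(T, T) ≅ R` the result is an exact sequence `0 → R → T_0 → ⋯ → T_n → 0` of right `R`-modules.
Each `T_i = Hom_S(P_i, T)` is a direct summand of some `Hom_S(S^k, T) ≅ T^k`.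
-/

open CategoryTheory Abelian

/-! ### Dimension shifting -/

section DimensionShifting

universe v w

variable {C : Type w} [Category.{v} C] [Abelian C] [HasExt.{u} C] {K : ShortComplex C}

theorem subsingleton_ext_one_iff_of_projective (hK : K.ShortExact) [Projective K.X₂] (Y : C) :
    Subsingleton (Ext.{u} K.X₃ Y 1) ↔ ∀ g : K.X₁ ⟶ Y, ∃ g' : K.X₂ ⟶ Y, K.f ≫ g' = g := by
  refine ⟨fun h g => ?_, fun h => subsingleton_of_forall_eq 0 fun x => ?_⟩
  · obtain ⟨y, hy⟩ := Ext.contravariant_sequence_exact₁ hK Y (Ext.mk₀ g) (add_zero 1) (h.elim _ _)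
    obtain ⟨g', rfl⟩ := (Ext.mk₀_bijective _ _).surjective y
    exact ⟨g', (Ext.mk₀_bijective _ _).injective (by simpa using hy)⟩
  · obtain ⟨y, rfl⟩ := Ext.contravariant_sequence_exact₃ hK Y x (Ext.eq_zero_of_projective _)
      (add_zero 1)
    obtain ⟨g, rfl⟩ := (Ext.mk₀_bijective _ _).surjective y
    obtain ⟨g', rfl⟩ := h g
    rw [← Ext.mk₀_comp_mk₀, hK.extClass_comp_assoc]

theorem subsingleton_ext_succ_iff_of_projective (hK : K.ShortExact) [Projective K.X₂] (Y : C)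
    (i : ℕ) : Subsingleton (Ext.{u} K.X₃ Y (i + 2)) ↔ Subsingleton (Ext.{u} K.X₁ Y (i + 1)) := by
  have hi : 1 + (i + 1) = i + 2 := by lia
  refine ⟨fun h => subsingleton_of_forall_eq 0 fun x => ?_,
    fun h => subsingleton_of_forall_eq 0 fun x => ?_⟩
  · obtain ⟨y, rfl⟩ := Ext.contravariant_sequence_exact₁ hK Y x hi (h.elim _ _)
    rw [y.eq_zero_of_projective, Ext.comp_zero]
  · obtain ⟨y, rfl⟩ := Ext.contravariant_sequence_exact₃ hK Y x (Ext.eq_zero_of_projective _) hi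
    rw [h.elim y 0, Ext.comp_zero]

end DimensionShifting

section ProjectivePresentation

universe v

variable {A : Type u} [Ring A] {P M : Type v} [AddCommGroup P] [Module A P] [AddCommGroup M]
  [Module A M] {f : P →ₗ[A] M}

instance [Module.Projective A P] : Projective f.shortComplexKer.X₂ :=
  inferInstanceAs (Projective (ModuleCat.of A P))

theorem hasProjectiveDimensionLE_succ_iff_ker [Module.Projective A P] (hf : Surjective f) (n : ℕ) :
    HasProjectiveDimensionLE (ModuleCat.of A M) (n + 1) ↔
      HasProjectiveDimensionLE (ModuleCat.of A (LinearMap.ker f)) n :=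
  (LinearMap.shortExact_shortComplexKer hf).hasProjectiveDimensionLT_X₃_iff n inferInstance

variable [Small.{v} A]

theorem subsingleton_ext_succ_iff_ker [Module.Projective A P] (hf : Surjective f)
    (Y : ModuleCat.{v} A) (i : ℕ) :
    Subsingleton (Ext.{v} (ModuleCat.of A M) Y (i + 2)) ↔
      Subsingleton (Ext.{v} (ModuleCat.of A (LinearMap.ker f)) Y (i + 1)) :=
  subsingleton_ext_succ_iff_of_projective (LinearMap.shortExact_shortComplexKer hf) Y i

theorem subsingleton_ext_one_iff_ker [Module.Projective A P] (hf : Surjective f) {Y : Type v}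
    [AddCommGroup Y] [Module A Y] :
    Subsingleton (Ext.{v} (ModuleCat.of A M) (ModuleCat.of A Y) 1) ↔
      ∀ g : LinearMap.ker f →ₗ[A] Y, ∃ g' : P →ₗ[A] Y, g' ∘ₗ (LinearMap.ker f).subtype = g := by
  refine (subsingleton_ext_one_iff_of_projective (LinearMap.shortExact_shortComplexKer hf) _).trans
    ⟨fun h g => ?_, fun h g => ?_⟩
  · obtain ⟨g', hg'⟩ := h (ModuleCat.ofHom g)
    exact ⟨g'.hom, congrArg ModuleCat.Hom.hom hg'⟩
  · obtain ⟨g', hg'⟩ := h g.hom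
    exact ⟨ModuleCat.ofHom g', ModuleCat.hom_ext hg'⟩

end ProjectivePresentation

section Resolutions

variable {A : Type u} [Ring A] {M : Type u} [AddCommGroup M] [Module A M]

/-! ### Projective dimension -/

theorem projDimLE_iff_hasProjectiveDimensionLE (n : ℕ) :
    ProjDimLE A M n ↔ HasProjectiveDimensionLE (ModuleCat.of A M) n := by
  induction n generalizing M with
  | zero =>
    exact (IsProjective.iff_projective (P := M)).trans
      (projective_iff_hasProjectiveDimensionLE_zero _)
  | succ n ih =>
    constructor
    · rintro ⟨⟨P, f, hf⟩, hP, hker⟩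
      have : Module.Projective A P := hP
      exact (hasProjectiveDimensionLE_succ_iff_ker hf n).2 (ih.1 hker)
    · intro hM
      have hf := Finsupp.linearCombination_id_surjective A M
      exact ⟨⟨ModuleCat.of A (M →₀ A), _, hf⟩, Module.Projective.of_free,
        ih.2 ((hasProjectiveDimensionLE_succ_iff_ker hf n).1 hM)⟩

theorem ProjDimLE.mono {m n : ℕ} (hM : ProjDimLE A M m) (hmn : m ≤ n) : ProjDimLE A M n := by
  rw [projDimLE_iff_hasProjectiveDimensionLE] at hM ⊢
  exact hasProjectiveDimensionLT_of_ge _ (m + 1) (n + 1) (by lia)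

/-! ### Syzygies -/

/-- The first syzygy `ker ε` of a projective resolution of `M`, resolved by the remaining terms. -/
def ResolutionData.syzygy {Q : ResolutionData A M} (hQ : Q.IsProjResolution) :
    ResolutionData A (LinearMap.ker Q.ε) where
  P n := Q.P (n + 1)
  d n := Q.d (n + 1)
  ε := (Q.d 0).codRestrict _ fun x => (hQ.exact0 _).2 ⟨x, rfl⟩

theorem ResolutionData.IsProjResolution.syzygy {Q : ResolutionData A M}
    (hQ : Q.IsProjResolution) : (ResolutionData.syzygy hQ).IsProjResolution where
  proj n := hQ.proj (n + 1)
  surj := by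
    rintro ⟨y, hy⟩
    obtain ⟨x, hx⟩ := (hQ.exact0 y).1 hy
    exact ⟨x, Subtype.ext hx⟩
  exact0 x := Subtype.ext_iff.trans (hQ.exactSucc 0 x)
  exactSucc n := hQ.exactSucc (n + 1)

theorem HasFGProjResolution.finite (hM : HasFGProjResolution A M) : Module.Finite A M := by
  obtain ⟨Q, hQ, hfin⟩ := hM
  have := hfin 0
  exact Module.Finite.of_surjective Q.ε hQ.surj

theorem HasFGProjResolution.exists_surjective (hM : HasFGProjResolution A M) :
    ∃ (P : ModuleCat.{u} A) (f : P →ₗ[A] M), Module.Projective A P ∧ Module.Finite A P ∧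
      Surjective f ∧ HasFGProjResolution A (LinearMap.ker f) := by
  obtain ⟨Q, hQ, hfin⟩ := hM
  exact ⟨ModuleCat.of A (Q.P 0), Q.ε, hQ.proj 0, hfin 0, hQ.surj,
    ResolutionData.syzygy hQ, hQ.syzygy, fun n => hfin (n + 1)⟩

theorem ExtVanishAll.subsingleton_ext {Y : Type u} [AddCommGroup Y] [Module A Y]
    (h : ExtVanishAll A M Y) (i : ℕ) :
    Subsingleton (Ext.{u} (ModuleCat.of A M) (ModuleCat.of A Y) (i + 1)) := by
  obtain ⟨Q, hQ, hexact⟩ := h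
  have := hQ.proj 0
  induction i generalizing M with
  | zero =>
    refine (subsingleton_ext_one_iff_ker hQ.surj).2 fun g => ?_
    have hcocycle : (g ∘ₗ (ResolutionData.syzygy hQ).ε) ∘ₗ (ResolutionData.syzygy hQ).d 0 = 0 := by
      rw [LinearMap.comp_assoc, hQ.syzygy.exact0.linearMap_comp_eq_zero, LinearMap.comp_zero]
    obtain ⟨g', hg'⟩ := (hexact 0 _).1 hcocycle
    exact ⟨g', (LinearMap.cancel_right hQ.syzygy.surj).1 hg'⟩
  | succ i ih =>
    exact (subsingleton_ext_succ_iff_ker hQ.surj _ i).2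
      (ih (ResolutionData.syzygy hQ) hQ.syzygy (fun j => hexact (j + 1)) (hQ.proj 1))

end Resolutions

/-! ### Coresolutions by a class of modules -/

section Coresolutions

variable {A : Type u} [Ring A]

theorem HasClassCoresolution.of_iso {C : ObjectProperty (ModuleCat.{u} A)}
    [C.IsClosedUnderIsomorphisms] {n : ℕ} {M N : ModuleCat.{u} A} (φ : M ≅ N)
    (hM : HasClassCoresolution A C n M) : HasClassCoresolution A C n N := by
  cases n with
  | zero => exact C.prop_of_iso φ hM
  | succ n =>
    obtain ⟨⟨E, f, hf⟩, hE, hcoker⟩ := hM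
    let ψ : N ≃ₗ[A] M := φ.symm.toLinearEquiv
    refine ⟨⟨E, f ∘ₗ ψ, hf.comp ψ.injective⟩, hE, ?_⟩
    rwa [LinearEquiv.range_comp ψ f]

theorem HasClassCoresolution.succ_of_exact {C : ObjectProperty (ModuleCat.{u} A)}
    [C.IsClosedUnderIsomorphisms] {n : ℕ} {M E N : ModuleCat.{u} A} {f : M →ₗ[A] E}
    {g : E →ₗ[A] N} (hf : Injective f) (hfg : Exact f g) (hg : Surjective g) (hE : C E)
    (hN : HasClassCoresolution A C n N) : HasClassCoresolution A C (n + 1) M :=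
  ⟨⟨E, f, hf⟩, hE, hN.of_iso (hfg.linearEquivOfSurjective hg).toModuleIso.symm⟩

instance (T : Type u) [AddCommGroup T] [Module A T] :
    ObjectProperty.IsClosedUnderIsomorphisms (InFinAddClass A T) where
  of_iso := by
    rintro M N φ ⟨k, f, g, hgf⟩
    let ψ : M ≃ₗ[A] N := φ.toLinearEquiv
    refine ⟨k, f ∘ₗ ψ.symm, ψ ∘ₗ g, LinearMap.ext fun x => ?_⟩
    simpa using congrArg ψ (LinearMap.congr_fun hgf (ψ.symm x))

end Coresolutions

/-! ### The functor `Hom_A(-, T)` for a bimodule `T` -/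

theorem exact_lcomp_of_exact_of_surjective {A B L M N T : Type*} [Ring A] [Ring B]
    [AddCommGroup L] [Module A L] [AddCommGroup M] [Module A M] [AddCommGroup N] [Module A N]
    [AddCommGroup T] [Module A T] [Module B T] [SMulCommClass A B T]
    {f : L →ₗ[A] M} {g : M →ₗ[A] N} (hfg : Exact f g) (hg : Surjective g) :
    Exact (LinearMap.lcomp B T g) (LinearMap.lcomp B T f) := by
  intro h
  simp only [LinearMap.lcomp_apply', Set.mem_range]
  refine ⟨fun hh => ?_, ?_⟩
  · refine ⟨(LinearMap.range f).liftQ h (LinearMap.range_le_ker_iff.mpr hh) ∘ₗ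
      (hfg.linearEquivOfSurjective hg).symm, ?_⟩
    ext x
    simp
  · rintro ⟨h, rfl⟩
    rw [LinearMap.comp_assoc, hfg.linearMap_comp_eq_zero, LinearMap.comp_zero]

section Hom

variable {A B : Type u} [Ring A] [Ring B] {T : Type u} [AddCommGroup T] [Module A T] [Module B T]
  [SMulCommClass A B T] {M : Type u} [AddCommGroup M] [Module A M]

theorem inFinAddClass_hom [Module.Projective A M] [Module.Finite A M] :
    InFinAddClass B T (ModuleCat.of B (M →ₗ[A] T)) := by
  obtain ⟨k, p, i, -, -, hpi⟩ := Module.Finite.exists_comp_eq_id_of_projective A M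
  let e : ((Fin k → A) →ₗ[A] T) ≃ₗ[B] (Fin k → T) := LinearEquiv.piRing A T (Fin k) B
  refine ⟨k, e ∘ₗ LinearMap.lcomp B T p, LinearMap.lcomp B T i ∘ₗ e.symm, ?_⟩
  ext f x
  simpa using congrArg f (LinearMap.congr_fun hpi x)

theorem hasClassCoresolution_hom (n : ℕ) (hM : HasFGProjResolution A M) (hdim : ProjDimLE A M n)
    (hext : ∀ i, Subsingleton (Ext.{u} (ModuleCat.of A M) (ModuleCat.of A T) (i + 1))) :
    HasClassCoresolution B (InFinAddClass B T) n (ModuleCat.of B (M →ₗ[A] T)) := by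
  induction n generalizing M with
  | zero =>
    have : Module.Projective A M := hdim
    have := hM.finite
    exact inFinAddClass_hom
  | succ n ih =>
    obtain ⟨P, f, _, _, hf, hker⟩ := hM.exists_surjective
    have hker_dim : ProjDimLE A (LinearMap.ker f) n := by
      rw [projDimLE_iff_hasProjectiveDimensionLE] at hdim ⊢
      exact (hasProjectiveDimensionLE_succ_iff_ker hf n).1 hdim
    exact HasClassCoresolution.succ_of_exact
      (E := ModuleCat.of B (P →ₗ[A] T)) (N := ModuleCat.of B (LinearMap.ker f →ₗ[A] T))
      (LinearMap.lcomp_injective_of_surjective f hf)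
      (exact_lcomp_of_exact_of_surjective (f.exact_subtype_ker_map) hf)
      ((subsingleton_ext_one_iff_ker hf).1 (hext 0)) inFinAddClass_hom
      (ih hker hker_dim fun i => (subsingleton_ext_succ_iff_ker hf _ i).1 (hext (i + 1)))

end Hom

section Bimodule

variable {S R : Type u} [Ring S] [Ring R] {T : Type u} [AddCommGroup T] [Module S T]
  [Module Rᵐᵒᵖ T] [SMulCommClass S Rᵐᵒᵖ T]

/-- The isomorphism `R ≅ End(_S T)` of right `R`-modules underlying a bijective right homothety. -/
def rightHomothetyEquiv (h : Bijective (rightHomothety S R T)) : R ≃ₗ[Rᵐᵒᵖ] (T →ₗ[S] T) :=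
  LinearEquiv.ofBijective
    ({ toFun := rightHomothety S R T
       map_add' := fun r r' => LinearMap.ext fun t => add_smul (op r) (op r') t
       map_smul' := fun ρ r => LinearMap.ext fun t => mul_smul ρ (op r) t } :
      R →ₗ[Rᵐᵒᵖ] (T →ₗ[S] T)) h

theorem hasClassCoresolution_ring {n : ℕ} (hbij : Bijective (rightHomothety S R T))
    (hres : HasFGProjResolution S T) (hext : ExtVanishAll S T T) (hdim : ProjDimLE S T n) :
    HasClassCoresolution Rᵐᵒᵖ (InFinAddClass Rᵐᵒᵖ T) n (ModuleCat.of Rᵐᵒᵖ R) :=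
  (hasClassCoresolution_hom n hres hdim hext.subsingleton_ext).of_iso
    (rightHomothetyEquiv hbij).toModuleIso.symm

theorem wakamatsu_finite_projDim_is_tilting_general {m n : ℕ}
    (hresR : HasFGProjResolution Rᵐᵒᵖ T) (hresS : HasFGProjResolution S T)
    (hbij : Bijective (rightHomothety S R T))
    (hextR : ExtVanishAll Rᵐᵒᵖ T T) (hextS : ExtVanishAll S T T)
    (hpdR : ProjDimLE Rᵐᵒᵖ T m) (hpdS : ProjDimLE S T n) :
    IsNTilting R T (max m n) where
  fgProjRes := hresR
  projDim := hpdR.mono (le_max_left m n)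
  extVanish := hextR
  coresolution := hasClassCoresolution_ring hbij hresS hextS (hpdS.mono (le_max_right m n))

end Bimodule

/-- If `T` is a Wakamatsu tilting `(S,R)`-bimodule with `pd(T_R) < ∞` and
`pd(_S T) < ∞`, then `T` is an `n`-tilting right `R`-module for some `n`. -/
theorem wakamatsu_finite_projDim_is_tilting
    (S R : Type u) [Ring S] [Ring R]
    (T : Type u) [AddCommGroup T] [Module S T] [Module Rᵐᵒᵖ T] [SMulCommClass S Rᵐᵒᵖ T]
    (hW : IsWakamatsuTilting S R T)
    (hpdR : ∃ n, ProjDimLE Rᵐᵒᵖ T n) (hpdS : ∃ n, ProjDimLE S T n) :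
    ∃ n, IsNTilting R T n := by
  obtain ⟨⟨m, hm⟩, n, hn⟩ := And.intro hpdR hpdS
  exact ⟨max m n, wakamatsu_finite_projDim_is_tilting_general hW.fgProjResR hW.fgProjResS hW.bijR
    hW.extR hW.extS hm hn⟩
end
end

section
/- Let C be a right R-module such that the injective dimension of C is finite and Ext^i_R(C^I, C) = 0 for every set I and all i ≥ 1, where C^I denotes the direct product of I copies of C. Then the following are equivalent: (a) there exist an injective cogenerator Q of the category of right R-modules and an exact sequence 0 → C_r → ⋯ → C_0 → Q → 0 in which each C_i belongs to Prod(C); (b) for every right R-module X with Ext^i_R(X, C) = 0 for all i ≥ 1, there exists a short exact sequence 0 → X → C_0 → X' → 0 with C_0 ∈ Prod(C) and Ext^i_R(X', C) = 0 for all i ≥ 1. -/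
open Function MulOpposite

universe u

noncomputable section

/-!
`(a) ⇒ (b)`: since `⊥C` is left orthogonal to `Prod(C)` and to the kernels of the resolution of
`Q`, every map `X → Q` with `X ∈ ⊥C` factors through `C_0`, so `C` cogenerates `X` and the
evaluation map `X → C^{Hom(X, C)}` is injective. All maps `X → C` extend along it, which puts its
cokernel in `⊥C`.

`(b) ⇒ (a)`: as `C` has finite injective dimension, the syzygies of any injective cogenerator `Q`
are eventually in `⊥C`. Going back up along these syzygies, `(b)` yields an Auslander–Buchweitz
approximation `0 → W → X → Q → 0` with `X ∈ ⊥C` and `W` finitely resolved by `Prod(C)`. The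
embedding of `X` into an object of `Prod(C)` provided by `(b)` splits because its cokernel is
orthogonal to `W` and to `Q`. Hence `X ∈ Prod(C)`.
-/

open CategoryTheory Limits Abelian

section Approximation

universe v w

variable {𝒜 : Type*} [Category.{v} 𝒜] [Abelian 𝒜]

section ShortExact

variable {S : ShortComplex 𝒜}

theorem shortExact_kernel {X Y : 𝒜} (p : X ⟶ Y) [Epi p] :
    (ShortComplex.mk (kernel.ι p) p (kernel.condition p)).ShortExact :=
  .mk' (ShortComplex.exact_kernel p) inferInstance ‹_›

theorem shortExact_cokernel {X Y : 𝒜} (i : X ⟶ Y) [Mono i] :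
    (ShortComplex.mk i (cokernel.π i) (cokernel.condition i)).ShortExact :=
  .mk' (ShortComplex.exact_cokernel i) ‹_› inferInstance

theorem exists_shortExact_of_isPushout (hS : S.ShortExact) {B E : 𝒜} {a : S.X₁ ⟶ B}
    {b : S.X₂ ⟶ E} {i : B ⟶ E} (h : IsPushout S.f a b i) :
    ∃ (p : E ⟶ S.X₃) (w : i ≫ p = 0), (ShortComplex.mk i p w).ShortExact := by
  have := hS.mono_f
  have := hS.epi_g
  have hb : b ≫ h.desc S.g 0 (by simp) = S.g := h.inl_desc ..
  have hi : i ≫ h.desc S.g 0 (by simp) = 0 := h.inr_desc ..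
  have : Mono i := (MorphismProperty.monomorphisms 𝒜).of_isPushout h.flip ‹_›
  have : Epi (h.desc S.g 0 (by simp)) := epi_of_epi_fac hb
  refine ⟨_, hi, .mk' (ShortComplex.exact_of_g_is_cokernel _ ?_) ‹_› ‹_›⟩
  refine CokernelCofork.IsColimit.ofπ _ _
    (fun s hs => hS.exact.desc (b ≫ s) (by rw [h.w_assoc, hs, comp_zero])) (fun s hs => ?_)
    (fun s hs m hm => ?_)
  · refine h.hom_ext ?_ ?_
    · rw [reassoc_of% hb, hS.exact.g_desc]
    · rw [reassoc_of% hi, zero_comp, hs]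
  · rw [← cancel_epi S.g, hS.exact.g_desc, ← hm, reassoc_of% hb]

theorem shortExact_comp_of_isPushout (hS : S.ShortExact) {D G : 𝒜} {f : S.X₂ ⟶ D} [Mono f]
    {t : D ⟶ G} {q : S.X₃ ⟶ G} (h : IsPushout f S.g t q) :
    (ShortComplex.mk (S.f ≫ f) t
      (by rw [Category.assoc, h.w, S.zero_assoc, zero_comp])).ShortExact := by
  have := hS.mono_f
  have := hS.epi_g
  have : Epi t := (MorphismProperty.epimorphisms 𝒜).of_isPushout h ‹_›
  refine .mk' (ShortComplex.exact_of_g_is_cokernel _ ?_) inferInstance ‹_›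
  have hs' {Z : 𝒜} (s : D ⟶ Z) (hs : (S.f ≫ f) ≫ s = 0) :
      f ≫ s = S.g ≫ hS.exact.desc (f ≫ s) (by rw [← Category.assoc, hs]) := by
    rw [hS.exact.g_desc]
  exact CokernelCofork.IsColimit.ofπ _ _ (fun s hs => h.desc s _ (hs' s hs))
    (fun _ _ => h.inl_desc ..) (fun s hs m hm => by rw [← cancel_epi t, hm, h.inl_desc])

end ShortExact

section ProdClass

variable [HasProducts.{v} 𝒜]

/-- `Prod(Y)`: the retracts of products of copies of `Y`. -/
def prodClass (Y : 𝒜) : ObjectProperty 𝒜 :=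
  fun M => ∃ I : Type v, Nonempty (Retract M (∏ᶜ fun _ : I => Y))

instance (Y : 𝒜) : (prodClass Y).IsStableUnderRetracts where
  of_retract := fun r ⟨I, ⟨s⟩⟩ => ⟨I, ⟨r.trans s⟩⟩

instance (Y : 𝒜) : (prodClass Y).ContainsZero where
  exists_zero :=
    let ⟨O, hO⟩ := HasZeroObject.zero (C := 𝒜)
    ⟨O, hO, PEmpty, ⟨0, 0, hO.eq_of_src _ _⟩⟩

theorem prodClass.eq_zero_of_forall_comp_eq_zero {Y D T : 𝒜} (hD : prodClass Y D) (x : T ⟶ D)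
    (hx : ∀ φ : D ⟶ Y, x ≫ φ = 0) : x = 0 := by
  obtain ⟨I, ⟨r⟩⟩ := hD
  rw [← cancel_mono r.i]
  exact Pi.hom_ext _ _ fun j => by simp [hx]

end ProdClass

/-- `HasFiniteResolution 𝒲 M` says that there is an exact sequence `0 → W_n → ⋯ → W_0 → M → 0`
with all `W_i` in `𝒲`; the inductive step splices a short exact sequence `0 → K → W_0 → M → 0`
with such a resolution of `K`. -/
inductive HasFiniteResolution (𝒲 : ObjectProperty 𝒜) : 𝒜 → Prop
  | of_prop {M : 𝒜} : 𝒲 M → HasFiniteResolution 𝒲 M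
  | of_shortExact {S : ShortComplex 𝒜} : S.ShortExact → 𝒲 S.X₂ →
      HasFiniteResolution 𝒲 S.X₁ → HasFiniteResolution 𝒲 S.X₃

variable [HasExt.{w} 𝒜]

/-- `Ext^i(X, Y) = 0` for all `i > k`; for `k = 0` this says that `X` lies in the left orthogonal
class `⊥Y`. -/
def ExtVanishesAbove (k : ℕ) (X Y : 𝒜) : Prop :=
  ∀ i, k < i → ∀ e : Ext X Y i, e = 0

namespace ExtVanishesAbove

variable {S : ShortComplex 𝒜} {X Y : 𝒜} {k : ℕ}

theorem of_projective [Projective X] (k : ℕ) : ExtVanishesAbove k X Y := by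
  rintro (_ | i) hi e
  · omega
  · exact e.eq_zero_of_projective

theorem of_hasInjectiveDimensionLT {n : ℕ} (X : 𝒜) [HasInjectiveDimensionLT Y (n + 1)] :
    ExtVanishesAbove n X Y :=
  fun _ hi e => e.eq_zero_of_hasInjectiveDimensionLT (n + 1) hi

theorem left_X₁ (hS : S.ShortExact) (h₂ : ExtVanishesAbove k S.X₂ Y)
    (h₃ : ExtVanishesAbove (k + 1) S.X₃ Y) : ExtVanishesAbove k S.X₁ Y := by
  intro i hi e
  obtain ⟨e₂, rfl⟩ := Ext.contravariant_sequence_exact₁ hS Y e rfl (h₃ _ (by omega) _)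
  rw [h₂ i hi e₂, Ext.comp_zero]

theorem left_X₂ (hS : S.ShortExact) (h₁ : ExtVanishesAbove k S.X₁ Y)
    (h₃ : ExtVanishesAbove k S.X₃ Y) : ExtVanishesAbove k S.X₂ Y := by
  intro i hi e
  obtain ⟨e₃, rfl⟩ := Ext.contravariant_sequence_exact₂ hS Y e (h₁ i hi _)
  rw [h₃ i hi e₃, Ext.comp_zero]

theorem left_X₃_of_exists_extension (hS : S.ShortExact) (h₁ : ExtVanishesAbove 0 S.X₁ Y)
    (h₂ : ExtVanishesAbove 0 S.X₂ Y)
    (hext : ∀ g : S.X₁ ⟶ Y, ∃ h : S.X₂ ⟶ Y, S.f ≫ h = g) : ExtVanishesAbove 0 S.X₃ Y := by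
  rintro (_ | _ | i) hi e
  · omega
  · obtain ⟨e₁, rfl⟩ := Ext.contravariant_sequence_exact₃ hS Y e (h₂ _ hi _) (n₀ := 0) rfl
    obtain ⟨g, rfl⟩ := (Ext.mk₀_bijective _ _).surjective e₁
    obtain ⟨h, rfl⟩ := hext g
    rw [← Ext.mk₀_comp_mk₀, ← Ext.comp_assoc_of_second_deg_zero, hS.extClass_comp, Ext.zero_comp]
  · obtain ⟨e₁, rfl⟩ := Ext.contravariant_sequence_exact₃ hS Y e (h₂ _ hi _)
      (show 1 + (i + 1) = _ by omega)
    rw [h₁ _ (by omega) e₁, Ext.comp_zero]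

theorem right_X₂ (hS : S.ShortExact) (h₁ : ExtVanishesAbove k X S.X₁)
    (h₃ : ExtVanishesAbove k X S.X₃) : ExtVanishesAbove k X S.X₂ := by
  intro i hi e
  obtain ⟨e₁, rfl⟩ := Ext.covariant_sequence_exact₂ X hS e (h₃ i hi _)
  rw [h₁ i hi e₁, Ext.zero_comp]

theorem right_X₃ (hS : S.ShortExact) (h₁ : ExtVanishesAbove k X S.X₁)
    (h₂ : ExtVanishesAbove k X S.X₂) : ExtVanishesAbove k X S.X₃ := by
  intro i hi e
  obtain ⟨e₂, rfl⟩ := Ext.covariant_sequence_exact₃ X hS e rfl (h₁ _ (by omega) _)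
  rw [h₂ i hi e₂, Ext.zero_comp]

theorem exists_extension (hS : S.ShortExact) (h : ExtVanishesAbove 0 S.X₃ Y) (g : S.X₁ ⟶ Y) :
    ∃ g' : S.X₂ ⟶ Y, S.f ≫ g' = g := by
  obtain ⟨e, he⟩ := Ext.contravariant_sequence_exact₁ hS Y (Ext.mk₀ g) rfl (h 1 one_pos _)
  obtain ⟨g', rfl⟩ := (Ext.mk₀_bijective _ _).surjective e
  exact ⟨g', (Ext.mk₀_bijective _ _).injective (by rw [← he, Ext.mk₀_comp_mk₀])⟩

theorem exists_lift (hS : S.ShortExact) (h : ExtVanishesAbove 0 X S.X₁) (g : X ⟶ S.X₃) :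
    ∃ g' : X ⟶ S.X₂, g' ≫ S.g = g := by
  obtain ⟨e, he⟩ := Ext.covariant_sequence_exact₃ X hS (Ext.mk₀ g) rfl (h 1 one_pos _)
  obtain ⟨g', rfl⟩ := (Ext.mk₀_bijective _ _).surjective e
  exact ⟨g', (Ext.mk₀_bijective _ _).injective (by rw [← he, Ext.mk₀_comp_mk₀])⟩

theorem of_retract {X' : 𝒜} (r : Retract X' X)
    (h : ExtVanishesAbove k X Y) : ExtVanishesAbove k X' Y := by
  intro i hi e
  rw [← Ext.mk₀_id_comp e, ← r.retract, ← Ext.mk₀_comp_mk₀_assoc, h i hi (.comp _ e _),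
    Ext.comp_zero]

theorem right_of_retract {Y' : 𝒜} (r : Retract Y' Y)
    (h : ExtVanishesAbove k X Y) : ExtVanishesAbove k X Y' := by
  intro i hi e
  rw [← Ext.comp_mk₀_id e, ← r.retract, ← Ext.mk₀_comp_mk₀,
    ← Ext.comp_assoc_of_third_deg_zero, h i hi (e.comp _ _), Ext.zero_comp]

theorem right_of_hasFiniteResolution {𝒲 : ObjectProperty 𝒜}
    (h : ∀ D, 𝒲 D → ExtVanishesAbove 0 X D) {M : 𝒜} (hM : HasFiniteResolution 𝒲 M) :
    ExtVanishesAbove 0 X M := by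
  induction hM with
  | of_prop hM => exact h _ hM
  | of_shortExact hS hD _ ih => exact .right_X₃ hS ih (h _ hD)

end ExtVanishesAbove

variable {𝒲 : ObjectProperty 𝒜} {X Y : 𝒜}

theorem HasFiniteResolution.exists_factorization (h : ∀ D, 𝒲 D → ExtVanishesAbove 0 X D) {M : 𝒜}
    (hM : HasFiniteResolution 𝒲 M) (g : X ⟶ M) :
    ∃ (D : 𝒜) (g' : X ⟶ D) (p : D ⟶ M), 𝒲 D ∧ g' ≫ p = g := by
  cases hM with
  | of_prop hM => exact ⟨M, g, 𝟙 M, hM, Category.comp_id g⟩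
  | of_shortExact hS hD hK =>
    obtain ⟨g', hg'⟩ := (ExtVanishesAbove.right_of_hasFiniteResolution h hK).exists_lift hS g
    exact ⟨_, g', _, hD, hg'⟩

theorem forall_ext_succ_eq_zero_iff (P : ProjectiveResolution X) (n : ℕ) :
    (∀ e : Ext X Y (n + 1), e = 0) ↔ ∀ f : P.complex.X (n + 1) ⟶ Y,
      P.complex.d (n + 2) (n + 1) ≫ f = 0 → ∃ g, P.complex.d (n + 1) n ≫ g = f := by
  refine ⟨fun h f hf => (P.extMk_eq_zero_iff f (n + 2) rfl hf n rfl).1 (h _), fun h e => ?_⟩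
  obtain ⟨f, hf, rfl⟩ := P.extMk_surjective e (n + 2) rfl
  exact (P.extMk_eq_zero_iff f (n + 2) rfl hf n rfl).2 (h f hf)

theorem extVanishesAbove_zero_iff (P : ProjectiveResolution X) :
    ExtVanishesAbove 0 X Y ↔ ∀ (n : ℕ) (f : P.complex.X (n + 1) ⟶ Y),
      P.complex.d (n + 2) (n + 1) ≫ f = 0 → ∃ g, P.complex.d (n + 1) n ≫ g = f := by
  simp only [← forall_ext_succ_eq_zero_iff]
  refine ⟨fun h n => h _ n.succ_pos, ?_⟩
  rintro h (_ | i) hi e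
  · omega
  · exact h i e

theorem ExtVanishesAbove.right_pi [EnoughProjectives 𝒜] {I : Type*} {Y : I → 𝒜} [HasProduct Y]
    (h : ∀ j, ExtVanishesAbove 0 X (Y j)) : ExtVanishesAbove 0 X (∏ᶜ Y) := by
  let P := ProjectiveResolution.of X
  refine (extVanishesAbove_zero_iff P).2 fun n f hf => ?_
  have hg (j : I) : ∃ g, P.complex.d (n + 1) n ≫ g = f ≫ Pi.π Y j :=
    (extVanishesAbove_zero_iff P).1 (h j) n _ (by rw [reassoc_of% hf, zero_comp])
  choose g hg using hg
  exact ⟨Pi.lift g, Pi.hom_ext _ _ fun j => by simp [hg]⟩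

theorem ExtVanishesAbove.right_of_prodClass [EnoughProjectives 𝒜] [HasProducts.{v} 𝒜]
    (h : ExtVanishesAbove 0 X Y) {D : 𝒜} (hD : prodClass Y D) : ExtVanishesAbove 0 X D :=
  let ⟨_, ⟨r⟩⟩ := hD
  .right_of_retract r (.right_pi fun _ => h)

/-- Every `X` in `⊥Y` embeds into an object of `𝒲` with cokernel in `⊥Y`. When `⊥Y` is left
orthogonal to `𝒲`, such an embedding is a special `𝒲`-preenvelope of `X`. -/
def HasSpecialPreenvelopes (𝒲 : ObjectProperty 𝒜) (Y : 𝒜) : Prop :=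
  ∀ X, ExtVanishesAbove 0 X Y →
    ∃ (D : 𝒜) (f : X ⟶ D), Mono f ∧ 𝒲 D ∧ ExtVanishesAbove 0 (cokernel f) Y

theorem HasSpecialPreenvelopes.exists_approximation [EnoughProjectives 𝒜] [𝒲.ContainsZero]
    (hY : HasSpecialPreenvelopes 𝒲 Y) {k : ℕ} {M : 𝒜} (hM : ExtVanishesAbove k M Y) :
    ∃ (W X : 𝒜) (i : W ⟶ X) (p : X ⟶ M) (w : i ≫ p = 0), (ShortComplex.mk i p w).ShortExact ∧
      HasFiniteResolution 𝒲 W ∧ ExtVanishesAbove 0 X Y := by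
  induction k generalizing M with
  | zero =>
    obtain ⟨O, hO, h𝒲O⟩ := 𝒲.exists_prop_of_containsZero
    have : Mono (0 : O ⟶ M) := ⟨fun _ _ _ => hO.eq_of_tgt _ _⟩
    exact ⟨O, M, 0, 𝟙 M, zero_comp, .mk' ((ShortComplex.exact_iff_mono _ rfl).2 inferInstance)
      this inferInstance, .of_prop h𝒲O, hM⟩
  | succ k ih =>
    have hP := shortExact_kernel (Projective.π M)
    obtain ⟨W, X, i, p, _, hX, hW, hXY⟩ := ih (.left_X₁ hP (.of_projective _) hM)
    obtain ⟨D, f, _, h𝒲D, hZ⟩ := hY X hXY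
    -- `G = D ⊔_X K` is resolved by `D` and `W`; `E = P ⊔_K G` covers `M` with kernel `G` and is an
    -- extension of `Z = coker f` by the projective `P`, hence lies in `⊥Y`.
    have hG := IsPushout.of_hasPushout f p
    have hE := IsPushout.of_hasPushout (kernel.ι (Projective.π M)) (pushout.inr f p)
    obtain ⟨_, _, hKGZ⟩ := exists_shortExact_of_isPushout (shortExact_cokernel f) hG
    obtain ⟨_, _, hGEM⟩ := exists_shortExact_of_isPushout hP hE
    obtain ⟨_, _, hPEZ⟩ := exists_shortExact_of_isPushout hKGZ hE.flip
    exact ⟨_, _, _, _, _, hGEM, .of_shortExact (shortExact_comp_of_isPushout hX hG) h𝒲D hW,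
      .left_X₂ hPEZ (.of_projective 0) hZ⟩

theorem HasSpecialPreenvelopes.hasFiniteResolution_of_injective [EnoughProjectives 𝒜]
    [𝒲.ContainsZero] [𝒲.IsStableUnderRetracts] (hY : HasSpecialPreenvelopes 𝒲 Y)
    (h𝒲 : ∀ X D, ExtVanishesAbove 0 X Y → 𝒲 D → ExtVanishesAbove 0 X D) {n : ℕ}
    (hn : HasInjectiveDimensionLT Y (n + 1)) (Q : 𝒜) [Injective Q] :
    HasFiniteResolution 𝒲 Q := by
  obtain ⟨W, X, i, p, _, hX, hW, hXY⟩ :=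
    hY.exists_approximation (.of_hasInjectiveDimensionLT (n := n) Q)
  obtain ⟨D, f, _, h𝒲D, hZ⟩ := hY X hXY
  have hZX : ExtVanishesAbove 0 (cokernel f) X :=
    .right_X₂ hX (.right_of_hasFiniteResolution (fun _ => h𝒲 _ _ hZ) hW)
      (.of_hasInjectiveDimensionLT _)
  obtain ⟨r, hr⟩ := hZX.exists_extension (shortExact_cokernel f) (𝟙 X)
  exact .of_shortExact hX (𝒲.prop_of_retract ⟨f, r, hr⟩ h𝒲D) hW

theorem HasFiniteResolution.hasSpecialPreenvelopes [EnoughProjectives 𝒜] [HasProducts.{v} 𝒜]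
    {Q : 𝒜} (hres : HasFiniteResolution (prodClass Y) Q) (hQ : IsCoseparator Q)
    (hY : ∀ I : Type v, ExtVanishesAbove 0 (∏ᶜ fun _ : I => Y) Y) :
    HasSpecialPreenvelopes (prodClass Y) Y := by
  intro X hX
  let ev : X ⟶ ∏ᶜ fun _ : X ⟶ Y => Y := Pi.lift id
  have hev (φ : X ⟶ Y) : ev ≫ Pi.π _ φ = φ := Pi.lift_π _ _
  have : Mono ev := Preadditive.mono_of_cancel_zero _ fun {T} x hx => by
    refine (Preadditive.isCoseparator_iff _).1 hQ x fun g => ?_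
    obtain ⟨D, g', p, hD, rfl⟩ := hres.exists_factorization (fun _ => hX.right_of_prodClass) g
    have hxg' : x ≫ g' = 0 := hD.eq_zero_of_forall_comp_eq_zero _ fun φ => by
      rw [Category.assoc, ← hev (g' ≫ φ), reassoc_of% hx, zero_comp]
    rw [reassoc_of% hxg', zero_comp]
  exact ⟨_, ev, this, ⟨X ⟶ Y, ⟨.refl _⟩⟩,
    .left_X₃_of_exists_extension (shortExact_cokernel ev) hX (hY _) fun φ => ⟨Pi.π _ φ, hev φ⟩⟩

end Approximation

section ProjectiveResolution

variable {𝒜 : Type*} [Category* 𝒜] [Abelian 𝒜]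

/-- The projective resolution of `X` given by a complex of projectives, exact in positive degrees,
augmented to `X` by a cokernel `ε` of its last differential. -/
def projectiveResolutionOfExact {X : 𝒜} (K : ChainComplex 𝒜 ℕ) (hK : ∀ n, Projective (K.X n))
    (ε : K.X 0 ⟶ X) [Epi ε] (w : K.d 1 0 ≫ ε = 0) (h₀ : (ShortComplex.mk _ _ w).Exact)
    (h : ∀ n, K.ExactAt (n + 1)) : ProjectiveResolution X where
  complex := K
  projective := hK
  π := (ChainComplex.toSingle₀Equiv _ _).symm ⟨ε, w⟩
  quasiIso := ⟨fun n => by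
    cases n with
    | zero =>
      rw [ChainComplex.quasiIsoAt₀_iff,
        ShortComplex.quasiIso_iff_of_zeros' _ (K.shape 0 0 (by simp)) rfl rfl]
      refine (ShortComplex.exact_and_epi_g_iff_of_iso (S₂ := .mk _ _ w) ?_).2 ⟨h₀, ‹_›⟩
      refine ShortComplex.isoMk (Iso.refl _) (Iso.refl _) (Iso.refl _) ?_ ?_
      · exact (Category.id_comp _).trans (Category.comp_id _).symm
      · exact (Category.id_comp _).trans
          ((ChainComplex.toSingle₀Equiv_symm_apply_f_zero ε w).symm.trans (Category.comp_id _).symm)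
    | succ n =>
      exact (quasiIsoAt_iff_exactAt' _ _ (ChainComplex.exactAt_succ_single_obj _ _)).2 (h n)⟩

end ProjectiveResolution

section ModuleCat

variable {A : Type u} [Ring A]

section Ext

variable {X Y : Type u} [AddCommGroup X] [Module A X] [AddCommGroup Y] [Module A Y]

namespace ResolutionData.IsProjResolution

variable {Q : ResolutionData A X}

/-- The complex `⋯ → P 1 → P 0` of a resolution, as a chain complex in the category of modules. -/
def chainComplex (hQ : Q.IsProjResolution) : ChainComplex (ModuleCat.{u} A) ℕ :=
  .of (fun n => ModuleCat.of A (Q.P n)) (fun n => ModuleCat.ofHom (Q.d n))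
    fun n => ModuleCat.hom_ext (hQ.exactSucc n).linearMap_comp_eq_zero

theorem chainComplex_d (hQ : Q.IsProjResolution) (n : ℕ) :
    hQ.chainComplex.d (n + 1) n = ModuleCat.ofHom (Q.d n) :=
  ChainComplex.of_d (fun n => ModuleCat.of A (Q.P n)) (fun n => ModuleCat.ofHom (Q.d n)) n

theorem exactAt_chainComplex (hQ : Q.IsProjResolution) (n : ℕ) :
    hQ.chainComplex.ExactAt (n + 1) := by
  rw [HomologicalComplex.exactAt_iff' _ (n + 1 + 1) (n + 1) n (by simp) (by simp),
    ShortComplex.ShortExact.moduleCat_exact_iff_function_exact]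
  change Function.Exact (hQ.chainComplex.d (n + 1 + 1) (n + 1)).hom
    (hQ.chainComplex.d (n + 1) n).hom
  rw [hQ.chainComplex_d, hQ.chainComplex_d]
  exact hQ.exactSucc n

/-- The resolution `⋯ → P 1 → P 0 → X` as a projective resolution in the category of modules. -/
def projectiveResolution (hQ : Q.IsProjResolution) : ProjectiveResolution (ModuleCat.of A X) :=
  have : Epi (Y := ModuleCat.of A X) (X := hQ.chainComplex.X 0) (ModuleCat.ofHom Q.ε) :=
    (ModuleCat.epi_iff_surjective _).2 hQ.surj
  have w : hQ.chainComplex.d 1 0 ≫ ModuleCat.ofHom Q.ε = 0 := by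
    rw [hQ.chainComplex_d 0]
    exact ModuleCat.hom_ext hQ.exact0.linearMap_comp_eq_zero
  projectiveResolutionOfExact hQ.chainComplex
    (fun n => (IsProjective.iff_projective (R := A) (Q.P n)).1 (hQ.proj n)) (ModuleCat.ofHom Q.ε)
    w ((ShortComplex.ShortExact.moduleCat_exact_iff_function_exact _).2 (by
      change Function.Exact (hQ.chainComplex.d 1 0).hom Q.ε
      rw [hQ.chainComplex_d 0]
      exact hQ.exact0))
    hQ.exactAt_chainComplex

theorem forall_exact_iff (hQ : Q.IsProjResolution) :
    (∀ j : ℕ, Function.Exact (fun f : Q.P j →ₗ[A] Y => f.comp (Q.d j))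
      (fun f : Q.P (j + 1) →ₗ[A] Y => f.comp (Q.d (j + 1)))) ↔
    ExtVanishesAbove 0 (ModuleCat.of A X) (ModuleCat.of A Y) := by
  rw [extVanishesAbove_zero_iff hQ.projectiveResolution]
  refine forall_congr' fun n => ?_
  change _ ↔ ∀ f : ModuleCat.of A (Q.P (n + 1)) ⟶ ModuleCat.of A Y,
    hQ.chainComplex.d (n + 1 + 1) (n + 1) ≫ f = 0 → ∃ g, hQ.chainComplex.d (n + 1) n ≫ g = f
  rw [hQ.chainComplex_d, hQ.chainComplex_d]
  constructor
  · intro h f hf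
    obtain ⟨g, hg⟩ := (h f.hom).1 congr(($hf).hom)
    exact ⟨ModuleCat.ofHom g, ModuleCat.hom_ext hg⟩
  · refine fun h f => ⟨fun hf => ?_, ?_⟩
    · obtain ⟨g, hg⟩ := h (ModuleCat.ofHom f) (ModuleCat.hom_ext hf)
      exact ⟨g.hom, congr(($hg).hom)⟩
    · rintro ⟨g, rfl⟩
      change (g.comp (Q.d n)).comp (Q.d (n + 1)) = 0
      rw [LinearMap.comp_assoc, (hQ.exactSucc n).linearMap_comp_eq_zero, LinearMap.comp_zero]

end ResolutionData.IsProjResolution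

theorem exists_isProjResolution (A : Type u) [Ring A] (X : Type u) [AddCommGroup X] [Module A X] :
    ∃ Q : ResolutionData A X, Q.IsProjResolution := by
  let P := ProjectiveResolution.of (ModuleCat.of A X)
  let Q : ResolutionData A X :=
    { P n := P.complex.X n
      d n := (P.complex.d (n + 1) n).hom
      ε := (P.π.f 0).hom }
  exact ⟨Q,
    { proj n := (IsProjective.iff_projective _).2 (P.projective n)
      surj := (ModuleCat.epi_iff_surjective _).1 (inferInstanceAs (Epi (P.π.f 0)))
      exact0 := (ShortComplex.ShortExact.moduleCat_exact_iff_function_exact _).1 P.exact₀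
      exactSucc n :=
        (ShortComplex.ShortExact.moduleCat_exact_iff_function_exact _).1 (P.exact_succ n) }⟩

theorem extVanishAll_iff :
    ExtVanishAll A X Y ↔ ExtVanishesAbove 0 (ModuleCat.of A X) (ModuleCat.of A Y) := by
  refine ⟨fun ⟨_, hQ, h⟩ => hQ.forall_exact_iff.1 h, fun h => ?_⟩
  obtain ⟨Q, hQ⟩ := exists_isProjResolution A X
  exact ⟨Q, hQ, hQ.forall_exact_iff.2 h⟩

end Ext

section Cogenerator

theorem isInjectiveCogenerator_iff {Q : ModuleCat.{u} A} :
    IsInjectiveCogenerator A Q ↔ CategoryTheory.Injective Q ∧ IsCoseparator Q := by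
  refine and_congr (Module.injective_iff_injective_object A Q) ?_
  rw [Preadditive.isCoseparator_iff]
  constructor
  · intro h M N g hg
    obtain ⟨I, f, hf⟩ := h N
    ext x
    refine hf (funext fun j => ?_)
    change f (g.hom x) j = f 0 j
    rw [map_zero]
    exact congr($(hg (ModuleCat.ofHom ((LinearMap.proj j).comp f))) x)
  · intro h M _ _
    refine ⟨M →ₗ[A] Q, .pi id, (injective_iff_map_eq_zero _).2 fun m hm => ?_⟩
    have hm' : ModuleCat.ofHom (LinearMap.toSpanSingleton A M m) = 0 :=
      h _ fun g => by
        ext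
        exact (congrArg g.hom (one_smul A m)).trans (congr_fun hm g.hom)
    simpa using congr($hm' (1 : A))

theorem exists_isInjectiveCogenerator (A : Type u) [Ring A] :
    ∃ Q : ModuleCat.{u} A, IsInjectiveCogenerator A Q := by
  obtain ⟨Q, hQ⟩ :=
    has_injective_coseparator (ModuleCat.of A (Shrink.{u} A)) (ModuleCat.isSeparator A)
  exact ⟨Q, isInjectiveCogenerator_iff.2 hQ⟩

end Cogenerator

section Classes

variable {C : Type u} [AddCommGroup C] [Module A C]

theorem inProdClass_eq_prodClass : InProdClass A C = prodClass (ModuleCat.of A C) := by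
  funext M
  refine propext (exists_congr fun I => ?_)
  have e : ∏ᶜ (fun _ : I => ModuleCat.of A C) ≅ ModuleCat.of A (I → C) := ModuleCat.piIsoPi _
  constructor
  · rintro ⟨f, g, h⟩
    exact ⟨(⟨ModuleCat.ofHom f, ModuleCat.ofHom g, ModuleCat.hom_ext h⟩ :
      Retract M (ModuleCat.of A (I → C))).trans (.ofIso e.symm)⟩
  · rintro ⟨r⟩
    let s := r.trans (.ofIso e)
    exact ⟨s.i.hom, s.r.hom, congrArg ModuleCat.Hom.hom s.retract⟩

variable {𝒲 : ObjectProperty (ModuleCat.{u} A)}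

theorem HasClassResolution.of_iso [𝒲.IsClosedUnderIsomorphisms] {n : ℕ} {M N : ModuleCat.{u} A}
    (e : M ≅ N) (hM : HasClassResolution A 𝒲 n M) : HasClassResolution A 𝒲 n N := by
  cases n with
  | zero => exact 𝒲.prop_of_iso e hM
  | succ n =>
    obtain ⟨p, hp, hker⟩ := hM
    let φ := e.toLinearEquiv
    refine ⟨⟨p.P, φ.toLinearMap.comp p.f, φ.surjective.comp p.surj⟩, hp, ?_⟩
    rwa [LinearEquiv.ker_comp]

theorem HasClassResolution.hasFiniteResolution {n : ℕ} {M : ModuleCat.{u} A}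
    (hM : HasClassResolution A 𝒲 n M) : HasFiniteResolution 𝒲 M := by
  induction n generalizing M with
  | zero => exact .of_prop hM
  | succ n ih =>
    obtain ⟨p, hp, hker⟩ := hM
    exact .of_shortExact (LinearMap.shortExact_shortComplexKer p.surj) hp (ih hker)

theorem HasFiniteResolution.exists_hasClassResolution [𝒲.IsClosedUnderIsomorphisms]
    {M : ModuleCat.{u} A} (hM : HasFiniteResolution 𝒲 M) :
    ∃ n, HasClassResolution A 𝒲 n M := by
  induction hM with
  | of_prop hM => exact ⟨0, hM⟩
  | @of_shortExact S hS hW _ ih =>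
    obtain ⟨n, hn⟩ := ih
    exact ⟨n + 1, ⟨S.X₂, S.g.hom, hS.moduleCat_surjective_g⟩, hW,
      hn.of_iso (hS.fIsKernel.conePointUniqueUpToIso (ModuleCat.kernelIsLimit S.g))⟩

theorem HasClassCoresolution.hasInjectiveDimensionLT {n : ℕ} {M : ModuleCat.{u} A}
    (h : HasClassCoresolution A (fun E => Module.Injective A E) n M) :
    HasInjectiveDimensionLT M (n + 1) := by
  induction n generalizing M with
  | zero =>
    have := (Module.injective_iff_injective_object A M).1 h
    exact inferInstanceAs (HasInjectiveDimensionLT (ModuleCat.of A M) 1)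
  | succ n ih =>
    obtain ⟨m, hm, hcoker⟩ := h
    let i : M ⟶ m.E := ModuleCat.ofHom m.f
    have : Mono i := (ModuleCat.mono_iff_injective i).2 m.inj
    have := (Module.injective_iff_injective_object A m.E).1 hm
    have hE : HasInjectiveDimensionLT m.E 1 :=
      inferInstanceAs (HasInjectiveDimensionLT (ModuleCat.of A m.E) 1)
    have := ih hcoker
    have hcoker' : HasInjectiveDimensionLT (cokernel i) (n + 1) :=
      hasInjectiveDimensionLT_of_iso (ModuleCat.cokernelIsoRangeQuotient i).symm (n + 1)
    exact (shortExact_cokernel i).hasInjectiveDimensionLT_X₁ (n + 1) hcoker'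
      (hasInjectiveDimensionLT_of_ge m.E 1 (n + 1 + 1) (by omega))

theorem hasSpecialPreenvelopes_iff :
    HasSpecialPreenvelopes 𝒲 (ModuleCat.of A C) ↔
      ∀ (X : Type u) [AddCommGroup X] [Module A X], ExtVanishAll A X C →
        ∃ (D : ModuleCat.{u} A) (f : X →ₗ[A] D), Function.Injective f ∧ 𝒲 D ∧
          ExtVanishAll A (D ⧸ LinearMap.range f) C := by
  have ext_cokernel_iff {X D : ModuleCat.{u} A} (f : X ⟶ D) :
      ExtVanishesAbove 0 (cokernel f) (ModuleCat.of A C) ↔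
        ExtVanishAll A (D ⧸ LinearMap.range f.hom) C := by
    let e := ModuleCat.cokernelIsoRangeQuotient f
    exact ⟨fun h => extVanishAll_iff.2 (h.of_retract (.ofIso e.symm)),
      fun h => (extVanishAll_iff.1 h).of_retract (.ofIso e)⟩
  constructor
  · intro h X _ _ hX
    obtain ⟨D, f, hf, hD, hZ⟩ := h (.of A X) (extVanishAll_iff.1 hX)
    exact ⟨D, f.hom, (ModuleCat.mono_iff_injective f).1 hf, hD, (ext_cokernel_iff f).1 hZ⟩
  · intro h X hX
    obtain ⟨D, f, hf, hD, hZ⟩ := h X (extVanishAll_iff.2 hX)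
    exact ⟨D, ModuleCat.ofHom f, (ModuleCat.mono_iff_injective _).2 hf, hD,
      (ext_cokernel_iff _).2 hZ⟩

theorem extVanishesAbove_pi {I Y : Type u} [AddCommGroup Y] [Module A Y]
    (h : ExtVanishAll A (I → C) Y) :
    ExtVanishesAbove 0 (∏ᶜ fun _ : I => ModuleCat.of A C) (ModuleCat.of A Y) :=
  (extVanishAll_iff.1 h).of_retract (.ofIso (ModuleCat.piIsoPi _))

end Classes

end ModuleCat

/-- Let `C` be a right `R`-module of finite injective dimension with
`Ext^{i≥1}_R(Cᴵ, C) = 0` for every set `I`. Then `(a)` there are an injective cogenerator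
`Q` and a finite exact sequence `0 → C_r → ⋯ → C_0 → Q → 0` with all `C_i ∈ Prod(C)` iff
`(b)` every `X` with `Ext^{i≥1}_R(X, C) = 0` fits in a short exact sequence
`0 → X → C_0 → X' → 0` with `C_0 ∈ Prod(C)` and `Ext^{i≥1}_R(X', C) = 0`. -/
theorem cotilting_coresolution_iff_special_preenvelopes
    (R : Type u) [Ring R]
    (C : Type u) [AddCommGroup C] [Module Rᵐᵒᵖ C]
    (hid : ∃ n, InjDimLE Rᵐᵒᵖ C n)
    (hext : ∀ I : Type u, ExtVanishAll Rᵐᵒᵖ (I → C) C) :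
    (∃ (Q : ModuleCat.{u} Rᵐᵒᵖ) (r : ℕ), IsInjectiveCogenerator Rᵐᵒᵖ Q ∧
        HasClassResolution Rᵐᵒᵖ (InProdClass Rᵐᵒᵖ C) r Q) ↔
    (∀ (X : Type u) [AddCommGroup X] [Module Rᵐᵒᵖ X], ExtVanishAll Rᵐᵒᵖ X C →
      ∃ (C₀ : ModuleCat.{u} Rᵐᵒᵖ) (f : X →ₗ[Rᵐᵒᵖ] (C₀ : Type u)),
        Function.Injective f ∧ InProdClass Rᵐᵒᵖ C C₀ ∧
        ExtVanishAll Rᵐᵒᵖ ((C₀ : Type u) ⧸ LinearMap.range f) C) := by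
  obtain ⟨n, hn⟩ := hid
  rw [inProdClass_eq_prodClass, ← hasSpecialPreenvelopes_iff]
  constructor
  · rintro ⟨Q, r, hQ, hres⟩
    exact hres.hasFiniteResolution.hasSpecialPreenvelopes (isInjectiveCogenerator_iff.1 hQ).2
      fun I => extVanishesAbove_pi (hext I)
  · intro hC
    obtain ⟨Q, hQ⟩ := exists_isInjectiveCogenerator Rᵐᵒᵖ
    have := (isInjectiveCogenerator_iff.1 hQ).1
    obtain ⟨r, hr⟩ := (hC.hasFiniteResolution_of_injective
      (fun _ _ h hD => h.right_of_prodClass hD)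
      hn.hasInjectiveDimensionLT Q).exists_hasClassResolution
    exact ⟨Q, r, hQ, hr⟩
end
end
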